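/- arXiv:1501.04402 — 2 statements merged into one kernel-verified Lean document; each statement's English description precedes it below -/
import Mathlib

section
/- Let G be a directed graph and G̃ a nonempty subgraph of G. Set Δ = Δ_out(G) + Δ_in(G) and ℓ = ⌊(δ_out(G̃)+1)/(1 + ln 6 + 3 ln Δ)⌋. If ℓ ≥ 1, then G̃ admits a valid ℓ-coloring, and hence C(G) ≥ ℓ. -/
noncomputable section

/-- Closed out-neighborhood of `v` in the graph with vertex set `S` and edge relation `E`. -/
def Nbr {V : Type*} (E : V → V → Prop) (S : Set V) (v : V) : Set V :=
  {v} ∪ {u | u ∈ S ∧ E v u}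

/-- A valid `ℓ`-coloring of the graph `(S, E)`: every color appears on every closed
out-neighborhood. -/
def ValidColoring {V : Type*} (E : V → V → Prop) (S : Set V) (ℓ : ℕ) (c : V → Fin ℓ) : Prop :=
  ∀ v ∈ S, ∀ i : Fin ℓ, ∃ u ∈ Nbr E S v, u ∈ S ∧ c u = i

/-- `(S, E')` is a nonempty subgraph of the graph `E` (on vertex set the whole type). -/
def IsSubgraph {V : Type*} (E : V → V → Prop) (S : Set V) (E' : V → V → Prop) : Prop :=
  S.Nonempty ∧ ∀ u v, E' u v → E u v ∧ u ∈ S ∧ v ∈ S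

/-- Some nonempty subgraph of `E` admits a valid `ℓ`-coloring. -/
def HasValid {V : Type*} (E : V → V → Prop) (ℓ : ℕ) : Prop :=
  ∃ (S : Set V) (E' : V → V → Prop) (c : V → Fin ℓ),
    IsSubgraph E S E' ∧ ValidColoring E' S ℓ c

/-- The writing capacity of the directed graph `E`. -/
def Cap {V : Type*} (E : V → V → Prop) : ℕ := sSup {ℓ | HasValid E ℓ}

/-- Out-degree. -/
def outDeg {V : Type*} (E : V → V → Prop) (v : V) : ℕ := Set.ncard {u | E v u}

/-- Maximum out-degree. -/
def maxOutDeg {V : Type*} [Fintype V] (E : V → V → Prop) : ℕ :=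
  Finset.univ.sup (outDeg E)

/-- Maximum in-degree. -/
def maxInDeg {V : Type*} [Fintype V] (E : V → V → Prop) : ℕ :=
  Finset.univ.sup (fun v => Set.ncard {u | E u v})

/-- Out-degree of `v` inside the subgraph `(S, E')`. -/
def subOutDeg {V : Type*} (E' : V → V → Prop) (S : Set V) (v : V) : ℕ :=
  Set.ncard {u | u ∈ S ∧ E' v u}

/-- Minimum out-degree of the subgraph `(S, E')`. -/
def minOutDeg {V : Type*} (E' : V → V → Prop) (S : Set V) : ℕ :=
  sInf {d | ∃ v ∈ S, d = subOutDeg E' S v}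

/-- The largest `k` such that `E` has a `k`-core (a nonempty subgraph of minimum
out-degree at least `k`). -/
def eta {V : Type*} (E : V → V → Prop) : ℕ :=
  sSup {k | ∃ (S : Set V) (E' : V → V → Prop),
    IsSubgraph E S E' ∧ ∀ v ∈ S, k ≤ subOutDeg E' S v}

/-- Number of directed edges. -/
def edgeCount {V : Type*} (E : V → V → Prop) : ℕ :=
  Set.ncard {p : V × V | E p.1 p.2}

open Finset in
/-- Counting form of the symmetric (lopsided) local lemma with `4 p d ≤ 1`. -/
theorem lll_aux {Ω I : Type*} [Fintype Ω] [Fintype I] [DecidableEq I] [DecidableEq Ω] [Nonempty Ω]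
    (A : I → Finset Ω) (Γ : I → Finset I) (p d : ℝ) (hp : 0 ≤ p) (hp2 : 2 * p < 1)
    (hd : ∀ i, ((Γ i).card : ℝ) ≤ d) (hpd : 4 * p * d ≤ 1)
    (hind : ∀ (i : I) (T : Finset I), i ∉ T → Disjoint T (Γ i) →
      (((univ.filter (fun c => ∀ j ∈ T, c ∉ A j)).filter (fun c => c ∈ A i)).card : ℝ)
        ≤ p * ((univ.filter (fun c => ∀ j ∈ T, c ∉ A j)).card : ℝ)) :
    ∃ c : Ω, ∀ i, c ∉ A i := by
  set B : Finset I → Finset Ω := fun T => univ.filter (fun c => ∀ j ∈ T, c ∉ A j) with hB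
  have key : ∀ (n : ℕ) (T : Finset I), T.card = n → ∀ i, i ∉ T →
      (((B T).filter (fun c => c ∈ A i)).card : ℝ) ≤ 2 * p * ((B T).card : ℝ) := by
    intro n
    induction n using Nat.strong_induction_on with
    | _ n ih =>
    intro T hT i hi
    set T2 := T \ Γ i with hT2
    set T1 := T ∩ Γ i with hT1
    have hsub : B T ⊆ B T2 := by
      intro c hc
      simp only [hB, mem_filter, mem_univ, true_and] at hc ⊢
      intro j hj
      exact hc j (mem_sdiff.1 hj).1
    have h1 : (((B T).filter (fun c => c ∈ A i)).card : ℝ) ≤ p * ((B T2).card : ℝ) := by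
      refine le_trans ?_ (hind i T2 (fun hh => hi (mem_sdiff.1 hh).1) sdiff_disjoint)
      exact_mod_cast card_le_card (filter_subset_filter _ hsub)
    have h2 : ((B T2).card : ℝ) ≤ (B T).card
        + ∑ j ∈ T1, (((B T2).filter (fun c => c ∈ A j)).card : ℝ) := by
      have : B T2 ⊆ B T ∪ T1.biUnion (fun j => (B T2).filter (fun c => c ∈ A j)) := by
        intro c hc
        by_cases hcT : c ∈ B T
        · exact mem_union_left _ hcT
        · apply mem_union_right
          have hc' := hc
          simp only [hB, mem_filter, mem_univ, true_and, not_forall, not_not] at hcT hc'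
          obtain ⟨j, hj, hcj⟩ := hcT
          refine mem_biUnion.2 ⟨j, ?_, mem_filter.2 ⟨hc, hcj⟩⟩
          by_contra hj1
          refine hc' j (mem_sdiff.2 ⟨hj, fun hg => hj1 (mem_inter.2 ⟨hj, hg⟩)⟩) hcj
      have h3 := (card_le_card this).trans ((card_union_le _ _).trans
        (Nat.add_le_add_left card_biUnion_le _))
      exact_mod_cast h3
    have h3 : ∑ j ∈ T1, (((B T2).filter (fun c => c ∈ A j)).card : ℝ)
        ≤ ∑ j ∈ T1, 2 * p * ((B T2).card : ℝ) := by
      refine sum_le_sum fun j hj => ?_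
      have hj' := mem_inter.1 hj
      refine ih T2.card ?_ T2 rfl j (fun hh => (mem_sdiff.1 hh).2 hj'.2)
      rw [← hT]
      refine card_lt_card ⟨sdiff_subset, fun hh => ?_⟩
      exact (mem_sdiff.1 (hh hj'.1)).2 hj'.2
    rw [sum_const, nsmul_eq_mul] at h3
    have h4 : (T1.card : ℝ) ≤ d := le_trans (by exact_mod_cast card_le_card inter_subset_right) (hd i)
    have h5 : (0:ℝ) ≤ ((B T2).card : ℝ) := Nat.cast_nonneg _
    have h6 : (T1.card : ℝ) * (2 * p * ((B T2).card : ℝ)) ≤ d * (2 * p * ((B T2).card : ℝ)) :=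
      mul_le_mul_of_nonneg_right h4 (by positivity)
    have h7 : 4 * p * d * ((B T2).card : ℝ) ≤ 1 * ((B T2).card : ℝ) :=
      mul_le_mul_of_nonneg_right hpd h5
    have h8 : ((B T2).card : ℝ) ≤ 2 * (B T).card := by linarith
    calc _ ≤ p * ((B T2).card : ℝ) := h1
      _ ≤ p * (2 * (B T).card) := mul_le_mul_of_nonneg_left h8 hp
      _ = _ := by ring
  have pos : ∀ T : Finset I, 0 < (B T).card := by
    intro T
    induction T using Finset.induction_on with
    | empty => simp [hB, Fintype.card_pos]
    | insert i T hi ih =>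
      have h1 := key _ T rfl i hi
      have h2 : B (insert i T) = (B T).filter (fun c => c ∉ A i) := by
        ext c
        simp only [hB, mem_filter, mem_univ, true_and, mem_insert, forall_eq_or_imp]
        tauto
      have h3 := card_filter_add_card_filter_not (s := B T) (fun c => c ∈ A i)
      rw [h2]
      by_contra h0
      have h0' : ((B T).filter (fun c => c ∉ A i)).card = 0 := by omega
      rw [h0', add_zero] at h3
      rw [h3] at h1
      have : (0:ℝ) < (B T).card := by exact_mod_cast ih
      nlinarith
  obtain ⟨c, hc⟩ := card_pos.1 (pos univ)
  exact ⟨c, fun i => (mem_filter.1 hc).2 i (mem_univ i)⟩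

open Finset in
theorem step_aux {V : Type*} [Fintype V] [DecidableEq V] {ℓ : ℕ} (X : Finset (V → Fin ℓ)) (u : V)
    (hX : ∀ c ∈ X, ∀ j, Function.update c u j ∈ X) (i : Fin ℓ) :
    (ℓ : ℝ) * ((X.filter (fun c => c u ≠ i)).card : ℝ) = ((ℓ : ℝ) - 1) * X.card := by
  have hle : ∀ a b : Fin ℓ, (X.filter (fun c => c u = a)).card ≤ (X.filter (fun c => c u = b)).card := by
    intro a b
    refine card_le_card_of_injOn (fun c => Function.update c u b) ?_ ?_
    · intro c hc
      have hc := mem_filter.1 (mem_coe.1 hc)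
      exact mem_coe.2 (mem_filter.2 ⟨hX c hc.1 b, by simp⟩)
    · intro c hc c' hc' hcc
      have hc := mem_filter.1 (mem_coe.1 hc)
      have hc' := mem_filter.1 (mem_coe.1 hc')
      funext w
      by_cases hw : w = u
      · subst hw; rw [hc.2, hc'.2]
      · have := congrFun hcc w
        simpa [hw] using this
  have h1 : X.card = ℓ * (X.filter (fun c => c u = i)).card := by
    rw [card_eq_sum_card_fiberwise (f := fun c => c u) (t := univ) (fun _ _ => by simp)]
    rw [sum_congr rfl (fun a _ => le_antisymm (hle a i) (hle i a))]
    simp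
  have h2 := card_filter_add_card_filter_not (s := X) (fun c => c u = i)
  have h1' : (X.card : ℝ) = ℓ * (X.filter (fun c => c u = i)).card := by exact_mod_cast h1
  have h2' : ((X.filter (fun c => c u = i)).card : ℝ) + ((X.filter (fun c => c u ≠ i)).card : ℝ) = X.card := by
    exact_mod_cast h2
  have : ((X.filter (fun c => c u ≠ i)).card : ℝ) = X.card - (X.filter (fun c => c u = i)).card := by
    linarith
  rw [this]; linarith

open Finset in
theorem miss_aux {V : Type*} [Fintype V] [DecidableEq V] {ℓ : ℕ} (X : Finset (V → Fin ℓ))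
    (i : Fin ℓ) (M : Finset V)
    (hX : ∀ u ∈ M, ∀ c ∈ X, ∀ j, Function.update c u j ∈ X) :
    ((X.filter (fun c => ∀ u ∈ M, c u ≠ i)).card : ℝ) = (1 - 1 / (ℓ:ℝ)) ^ M.card * X.card := by
  have hl : (0:ℝ) < ℓ := by exact_mod_cast i.pos
  induction M using Finset.induction_on with
  | empty => simp
  | insert u M hu ih =>
    have ih := ih (fun w hw => hX w (mem_insert_of_mem hw))
    have h1 : X.filter (fun c => ∀ w ∈ insert u M, c w ≠ i)
        = (X.filter (fun c => ∀ w ∈ M, c w ≠ i)).filter (fun c => c u ≠ i) := by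
      ext c
      simp only [mem_filter, mem_insert, forall_eq_or_imp]
      tauto
    have h2 := step_aux (X.filter (fun c => ∀ w ∈ M, c w ≠ i)) u (by
      intro c hc j
      have hc := mem_filter.1 hc
      refine mem_filter.2 ⟨hX u (mem_insert_self _ _) c hc.1 j, fun w hw => ?_⟩
      have : w ≠ u := fun h => hu (h ▸ hw)
      simpa [this] using hc.2 w hw) i
    rw [h1, card_insert_of_notMem hu, pow_succ]
    rw [ih] at h2
    field_simp at h2 ⊢
    linarith

theorem num_aux (δ D ℓ : ℕ) (hδ : δ ≤ D) (hℓ : 2 ≤ ℓ)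
    (h : (ℓ : ℝ) * (1 + Real.log 6 + 3 * Real.log (D : ℝ)) ≤ δ + 1) :
    1 ≤ D ∧ (ℓ : ℝ) * Real.exp (-(δ / ℓ : ℝ)) ≤ 1 / (9 * (D:ℝ) ^ 2) := by
  have hl : (2:ℝ) ≤ ℓ := by exact_mod_cast hℓ
  have hlog6 : 1 ≤ Real.log 6 := by
    rw [Real.le_log_iff_exp_le (by norm_num)]
    linarith [Real.exp_one_lt_d9]
  have hlogD : 0 ≤ Real.log (D:ℝ) := Real.log_natCast_nonneg D
  have h2 : (ℓ : ℝ) * 2 ≤ δ + 1 :=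
    le_trans (mul_le_mul_of_nonneg_left (by linarith) (by linarith)) h
  have hδD : (δ : ℝ) ≤ D := by exact_mod_cast hδ
  have hD : (0:ℝ) < D := by linarith
  have hlD : (ℓ : ℝ) ≤ D := by linarith
  refine ⟨by exact_mod_cast hD, ?_⟩
  have e1 : -(δ / ℓ : ℝ) ≤ -(1/2) - (Real.log 6 + 3 * Real.log (D:ℝ)) := by
    have : (1 + Real.log 6 + 3 * Real.log (D : ℝ)) - 1/2 ≤ δ / ℓ := by
      rw [le_div_iff₀ (by linarith)]
      nlinarith
    linarith
  have e2 : Real.exp (-(1/2) - (Real.log 6 + 3 * Real.log (D:ℝ)))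
      = Real.exp (-(1/2)) * (1 / (6 * (D:ℝ)^3)) := by
    rw [sub_eq_add_neg, Real.exp_add, Real.exp_neg (Real.log 6 + _), Real.exp_add,
      Real.exp_log (by norm_num), show 3 * Real.log (D:ℝ) = Real.log ((D:ℝ)^3) by simp,
      Real.exp_log (by positivity), one_div (6 * (D:ℝ)^3)]
  have e3 : Real.exp (-(1/2)) ≤ 2/3 := by
    rw [Real.exp_neg, inv_le_comm₀ (Real.exp_pos _) (by norm_num)]
    linarith [Real.add_one_le_exp (1/2 : ℝ)]
  calc (ℓ : ℝ) * Real.exp (-(δ / ℓ : ℝ)) ≤ D * (2/3 * (1 / (6 * (D:ℝ)^3))) := by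
        refine mul_le_mul hlD ?_ (Real.exp_pos _).le hD.le
        refine (Real.exp_le_exp.2 e1).trans ?_
        rw [e2]
        exact mul_le_mul_of_nonneg_right e3 (by positivity)
    _ = _ := by field_simp; norm_num

theorem cap_aux {V : Type*} [Fintype V] (E : V → V → Prop) (ℓ : ℕ) (h : HasValid E ℓ) :
    ℓ ≤ Cap E := by
  refine le_csSup ⟨Fintype.card V, ?_⟩ h
  rintro k ⟨S, E', c, ⟨⟨v, hv⟩, _⟩, hc⟩
  have hs : Function.Surjective c := fun i => by
    obtain ⟨u, _, _, hu⟩ := hc v hv i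
    exact ⟨u, hu⟩
  simpa using Fintype.card_le_of_surjective c hs

open Finset in
open scoped Classical in
theorem exists_aux {V : Type*} [Fintype V] (E E' : V → V → Prop) (S : Set V)
    (h : IsSubgraph E S E') (ℓ : ℕ) (hℓ2 : 2 ≤ ℓ)
    (hmain : (ℓ : ℝ) * (1 + Real.log 6 + 3 * Real.log ((maxOutDeg E + maxInDeg E : ℕ) : ℝ))
      ≤ (minOutDeg E' S : ℝ) + 1) :
    ∃ c : V → Fin ℓ, ValidColoring E' S ℓ c := by
  have hout : ∀ v, (univ.filter (fun u => E v u)).card ≤ maxOutDeg E := by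
    intro v
    have h1 : outDeg E v ≤ maxOutDeg E := le_sup (f := outDeg E) (mem_univ v)
    refine le_trans (le_of_eq ?_) h1
    rw [outDeg, ← Set.ncard_coe_finset]; simp
  have hin : ∀ v, (univ.filter (fun u => E u v)).card ≤ maxInDeg E := by
    intro v
    have h1 : Set.ncard {u | E u v} ≤ maxInDeg E :=
      le_sup (f := fun v => Set.ncard {u | E u v}) (mem_univ v)
    refine le_trans (le_of_eq ?_) h1
    rw [← Set.ncard_coe_finset]; simp
  set D := maxOutDeg E + maxInDeg E with hD
  set δ := minOutDeg E' S with hδ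
  set M : V → Finset V := fun v => univ.filter (fun u => u ∈ Nbr E' S v) with hM
  have hMcard : ∀ v ∈ S, δ ≤ (univ.filter (fun u => u ∈ S ∧ E' v u)).card := by
    intro v hv
    have h1 : δ ≤ subOutDeg E' S v := Nat.sInf_le ⟨v, hv, rfl⟩
    refine h1.trans (le_of_eq ?_)
    rw [subOutDeg, ← Set.ncard_coe_finset]; simp
  have hδM : ∀ v ∈ S, δ ≤ (M v).card := by
    intro v hv
    refine (hMcard v hv).trans (card_le_card ?_)
    intro u hu
    simp only [hM, mem_filter, mem_univ, true_and] at hu ⊢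
    exact Or.inr hu
  have hδD : δ ≤ D := by
    obtain ⟨v, hv⟩ := h.1
    refine (hMcard v hv).trans (le_trans (card_le_card ?_) ((hout v).trans (Nat.le_add_right _ _)))
    intro u hu
    simp only [mem_filter, mem_univ, true_and] at hu ⊢
    exact (h.2 _ _ hu.2).1
  obtain ⟨hD1, hp⟩ := num_aux δ D ℓ hδD hℓ2 hmain
  have hD1' : (1:ℝ) ≤ D := by exact_mod_cast hD1
  have hlpos : (0:ℝ) < ℓ := by
    have : 0 < ℓ := by omega
    exact_mod_cast this
  set p : ℝ := (ℓ : ℝ) * Real.exp (-(δ / ℓ : ℝ)) with hpdef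
  have hp0 : 0 ≤ p := by positivity
  haveI : NeZero ℓ := ⟨by omega⟩
  let A : V → Finset (V → Fin ℓ) := fun v =>
    univ.filter (fun c => v ∈ S ∧ ∃ i, ∀ u ∈ M v, c u ≠ i)
  let Γ : V → Finset V := fun v => univ.filter (fun w => w ≠ v ∧ ¬ Disjoint (M v) (M w))
  have hΓ : ∀ v, ((Γ v).card : ℝ) ≤ 2 * (D:ℝ)^2 := by
    intro v
    have hsub : Γ v ⊆ (univ.filter (fun u => E v u) ∪ univ.filter (fun u => E u v)) ∪
        (univ.filter (fun u => E v u)).biUnion (fun u => univ.filter (fun w => E w u)) := by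
      intro w hw
      simp only [Γ, mem_filter, mem_univ, true_and] at hw
      obtain ⟨hwv, hnd⟩ := hw
      rw [not_disjoint_iff] at hnd
      obtain ⟨u, hu1, hu2⟩ := hnd
      simp only [hM, mem_filter, mem_univ, true_and] at hu1 hu2
      simp only [mem_union, mem_biUnion, mem_filter, mem_univ, true_and]
      rcases hu1 with hu1 | hu1 <;> rcases hu2 with hu2 | hu2
      · exact absurd ((Set.mem_singleton_iff.1 hu2).symm.trans (Set.mem_singleton_iff.1 hu1)) hwv
      · rw [Set.mem_singleton_iff] at hu1
        subst hu1
        exact Or.inl (Or.inr (h.2 _ _ hu2.2).1)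
      · rw [Set.mem_singleton_iff] at hu2
        subst hu2
        exact Or.inl (Or.inl (h.2 _ _ hu1.2).1)
      · exact Or.inr ⟨u, (h.2 _ _ hu1.2).1, (h.2 _ _ hu2.2).1⟩
    have hc : (Γ v).card ≤ D + maxOutDeg E * maxInDeg E := by
      refine (card_le_card hsub).trans ((card_union_le _ _).trans (Nat.add_le_add ?_ ?_))
      · exact (card_union_le _ _).trans (Nat.add_le_add (hout v) (hin v))
      · refine (card_biUnion_le_card_mul _ _ _ (fun u _ => hin u)).trans ?_
        exact Nat.mul_le_mul_right _ (hout v)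
    have hc2 : (Γ v).card ≤ 2 * D ^ 2 := by
      have : maxOutDeg E * maxInDeg E ≤ D * D :=
        Nat.mul_le_mul (Nat.le_add_right _ _) (Nat.le_add_left _ _)
      nlinarith
    exact_mod_cast hc2
  have hDsq : (1:ℝ) ≤ (D:ℝ)^2 := one_le_pow₀ hD1'
  have hp9 : p * (9 * (D:ℝ)^2) ≤ 1 := by
    rwa [le_div_iff₀ (by positivity)] at hp
  obtain ⟨c, hc⟩ := lll_aux A Γ p (2 * (D:ℝ)^2) hp0 (by nlinarith) hΓ (by nlinarith) (by
    intro v T hvT hdis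
    set X := univ.filter (fun c : V → Fin ℓ => ∀ j ∈ T, c ∉ A j) with hX
    by_cases hv : v ∈ S
    swap
    · have : X.filter (fun c => c ∈ A v) = ∅ := by
        ext c; simp [A, hv]
      rw [this]; simp; positivity
    have hinv : ∀ u ∈ M v, ∀ c ∈ X, ∀ j, Function.update c u j ∈ X := by
      intro u hu c hc j
      simp only [hX, mem_filter, mem_univ, true_and] at hc ⊢
      intro w hw hbad
      apply hc w hw
      simp only [A, mem_filter, mem_univ, true_and] at hbad ⊢
      obtain ⟨hwS, i, hi⟩ := hbad
      refine ⟨hwS, i, fun x hx => ?_⟩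
      have hxu : x ≠ u := by
        rintro rfl
        refine (disjoint_left.1 hdis hw) ?_
        simp only [Γ, mem_filter, mem_univ, true_and]
        refine ⟨fun hh => hvT (hh ▸ hw), ?_⟩
        rw [not_disjoint_iff]
        exact ⟨x, hu, hx⟩
      simpa [hxu] using hi x hx
    have hsub : X.filter (fun c => c ∈ A v) ⊆
        (univ : Finset (Fin ℓ)).biUnion (fun i => X.filter (fun c => ∀ u ∈ M v, c u ≠ i)) := by
      intro c hc
      obtain ⟨hc1, hc2⟩ := mem_filter.1 hc
      obtain ⟨_, i, hi⟩ := (mem_filter.1 hc2).2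
      exact mem_biUnion.2 ⟨i, mem_univ _, mem_filter.2 ⟨hc1, hi⟩⟩
    have hb : ((X.filter (fun c => c ∈ A v)).card : ℝ) ≤
        ∑ i : Fin ℓ, ((X.filter (fun c => ∀ u ∈ M v, c u ≠ i)).card : ℝ) := by
      exact_mod_cast (card_le_card hsub).trans card_biUnion_le
    refine hb.trans ?_
    rw [sum_congr rfl (fun i _ => miss_aux X i (M v) hinv)]
    rw [sum_const, card_univ, Fintype.card_fin, nsmul_eq_mul, hpdef, mul_assoc]
    refine mul_le_mul_of_nonneg_left ?_ hlpos.le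
    refine mul_le_mul_of_nonneg_right ?_ (Nat.cast_nonneg _)
    have h1l : 1 / (ℓ:ℝ) ≤ 1 := by
      rw [div_le_one hlpos]
      have : (2:ℝ) ≤ ℓ := by exact_mod_cast hℓ2
      linarith
    calc (1 - 1 / (ℓ:ℝ)) ^ (M v).card ≤ (1 - 1 / (ℓ:ℝ)) ^ δ :=
          pow_le_pow_of_le_one (by linarith) (by linarith [one_div_pos.2 hlpos]) (hδM v hv)
      _ ≤ (Real.exp (-(1 / (ℓ:ℝ)))) ^ δ :=
          pow_le_pow_left₀ (by linarith) (Real.one_sub_le_exp_neg _) _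
      _ = _ := by
          rw [← Real.exp_nat_mul]; congr 1; ring)
  refine ⟨c, fun v hv i => ?_⟩
  by_contra hcon
  push Not at hcon
  apply hc v
  simp only [A, mem_filter, mem_univ, true_and]
  refine ⟨hv, i, fun u hu => ?_⟩
  have hu' : u ∈ Nbr E' S v := (mem_filter.1 hu).2
  refine hcon u hu' ?_
  rcases hu' with hu' | hu'
  · rw [Set.mem_singleton_iff] at hu'; exact hu' ▸ hv
  · exact hu'.1

/-- Lovász-local-lemma lower bound: with
`ℓ = ⌊(δ_out(G̃)+1)/(1 + ln 6 + 3 ln Δ)⌋`, `Δ = Δ_out(G) + Δ_in(G)`, if `ℓ ≥ 1`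
then `G̃` admits a valid `ℓ`-coloring, and hence `C(G) ≥ ℓ`. -/
theorem lll_lower_bound {V : Type*} [Fintype V] (E E' : V → V → Prop) (S : Set V)
    (h : IsSubgraph E S E') (ℓ : ℕ)
    (hℓdef : ℓ = ⌊((minOutDeg E' S : ℝ) + 1)
      / (1 + Real.log 6 + 3 * Real.log ((maxOutDeg E + maxInDeg E : ℕ) : ℝ))⌋₊)
    (hℓ : 1 ≤ ℓ) :
    (∃ c : V → Fin ℓ, ValidColoring E' S ℓ c) ∧ ℓ ≤ Cap E := by
  have hex : ∃ c : V → Fin ℓ, ValidColoring E' S ℓ c := by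
    rcases Nat.lt_or_ge 1 ℓ with h2 | h1
    · refine exists_aux E E' S h ℓ h2 ?_
      have hL : 0 < 1 + Real.log 6 + 3 * Real.log ((maxOutDeg E + maxInDeg E : ℕ) : ℝ) := by
        have h6 : 0 ≤ Real.log 6 := Real.log_nonneg (by norm_num)
        have hD := Real.log_natCast_nonneg (maxOutDeg E + maxInDeg E)
        linarith
      rw [← le_div_iff₀ hL]
      rw [hℓdef]
      exact Nat.floor_le (by positivity)
    · have : ℓ = 1 := le_antisymm h1 hℓ
      clear hℓdef
      subst this
      exact ⟨fun _ => 0, fun v hv i => ⟨v, Or.inl rfl, hv, Subsingleton.elim _ _⟩⟩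
  obtain ⟨c, hc⟩ := hex
  exact ⟨⟨c, hc⟩, cap_aux E ℓ ⟨S, E', c, h, hc⟩⟩
end
end

section
/- Let G be a bidirectional graph on n vertices and 0 < α ≤ 1 a real constant with ⌊αn⌋ ≥ 2. If the number of directed edges satisfies |E| > n²·(⌊αn⌋−2)/(⌊αn⌋−1), then C(G) ≥ ⌊αn⌋. -/
noncomputable section

theorem hasValid_le_card {V : Type*} [Fintype V] (E : V → V → Prop) (l : ℕ)
    (h : HasValid E l) : l ≤ Fintype.card V := by
  obtain ⟨S, E', c, ⟨⟨v, hv⟩, -⟩, hc⟩ := h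
  have hs : Function.Surjective c := fun i => by
    obtain ⟨u, -, -, hu⟩ := hc v hv i
    exact ⟨u, hu⟩
  simpa using Fintype.card_le_of_surjective c hs

theorem hasValid_of_clique {V : Type*} (G : SimpleGraph V) (m : ℕ) (hm : 0 < m)
    (s : Finset V) (hs : G.IsNClique m s) : HasValid G.Adj m := by
  classical
  obtain ⟨hcl, hcard⟩ := hs
  let e := s.equivFinOfCardEq hcard
  refine ⟨(s : Set V), fun u v => G.Adj u v ∧ u ∈ s ∧ v ∈ s,
    fun v => if h : v ∈ s then e ⟨v, h⟩ else ⟨0, hm⟩, ⟨?_, ?_⟩, ?_⟩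
  · exact Finset.coe_nonempty.mpr (Finset.card_pos.mp (by omega))
  · intro u v h
    simpa using h
  · intro v hv i
    have hv' : v ∈ s := by simpa using hv
    refine ⟨(e.symm i).1, ?_, by simp, by simp⟩
    by_cases h : (e.symm i).1 = v
    · left; simpa using h
    · right
      refine ⟨by simp, ?_, hv', (e.symm i).2⟩
      exact hcl hv (by simp) (Ne.symm h)

theorem edgeCount_eq {V : Type*} [Fintype V] (G : SimpleGraph V) [DecidableRel G.Adj] :
    edgeCount G.Adj = 2 * G.edgeFinset.card := by
  classical
  rw [← G.sum_degrees_eq_twice_card_edges, edgeCount, Set.ncard_eq_toFinset_card']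
  simp only [Set.toFinset_setOf, Finset.card_filter, Fintype.sum_prod_type,
    SimpleGraph.degree, SimpleGraph.neighborFinset_eq_filter]

theorem turan_bound {V : Type*} [Fintype V] (G : SimpleGraph V) [DecidableRel G.Adj]
    (r : ℕ) (hr : 0 < r) (cf : G.CliqueFree (r + 1)) :
    2 * r * G.edgeFinset.card ≤ (r - 1) * (Fintype.card V) ^ 2 := by
  classical
  obtain ⟨H, _, maxH⟩ := SimpleGraph.exists_isTuranMaximal (V := V) hr
  have h1 := maxH.2 cf
  have h2 := ((SimpleGraph.isTuranMaximal_iff_nonempty_iso_turanGraph hr).mp maxH).some.card_edgeFinset_eq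
  have h3 := SimpleGraph.mul_card_edgeFinset_turanGraph_le (n := Fintype.card V) (r := r)
  rw [← h2] at h3
  exact le_trans (Nat.mul_le_mul_left _ h1) h3

/-- Turán-based lower bound on the writing capacity of a dense bidirectional graph. -/
theorem turan_cap_lower_bound {V : Type*} [Fintype V] (E : V → V → Prop)
    (hsym : Symmetric E) (hirr : ∀ v, ¬ E v v) (α : ℝ) (hα0 : 0 < α) (hα1 : α ≤ 1)
    (hfloor : 2 ≤ ⌊α * (Fintype.card V : ℝ)⌋₊)
    (hE : ((Fintype.card V : ℝ)) ^ 2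
        * ((⌊α * (Fintype.card V : ℝ)⌋₊ : ℝ) - 2) / ((⌊α * (Fintype.card V : ℝ)⌋₊ : ℝ) - 1)
      < (edgeCount E : ℝ)) :
    ⌊α * (Fintype.card V : ℝ)⌋₊ ≤ Cap E := by
  classical
  generalize ⌊α * (Fintype.card V : ℝ)⌋₊ = m at *
  let G : SimpleGraph V := { Adj := E, symm := ⟨hsym⟩, loopless := ⟨hirr⟩ }
  have hG : edgeCount E = 2 * G.edgeFinset.card := edgeCount_eq G
  refine le_csSup ⟨Fintype.card V, fun l hl => hasValid_le_card E l hl⟩ ?_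
  by_contra hno
  obtain ⟨r, rfl⟩ : ∃ r, m = r + 1 + 1 := ⟨m - 2, by omega⟩
  have cf : G.CliqueFree (r + 1 + 1) := fun s hs =>
    hno (hasValid_of_clique G _ (by omega) s hs)
  have hb := turan_bound G (r + 1) (by omega) cf
  rw [Nat.add_sub_cancel] at hb
  have hb' : (2 * ((r : ℝ) + 1) * (G.edgeFinset.card : ℝ)) ≤ r * (Fintype.card V : ℝ) ^ 2 := by
    exact_mod_cast hb
  rw [hG] at hE
  push_cast at hE
  rw [div_lt_iff₀ (by linarith [(Nat.cast_nonneg r : (0 : ℝ) ≤ r)])] at hE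
  nlinarith
end
end
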